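/- Let d ≥ 1 and let n_1, n_2, …, n_d ≥ 2 be integers with n_1 ≥ n_i for all i, and set N = n_1 n_2 ⋯ n_d. Let P be the transition matrix of the lazy random walk on the periodic lattice ℤ_{n_1} × ℤ_{n_2} × ⋯ × ℤ_{n_d}, i.e. P = (1/2)·I + (1/(4d))·Σ_{i=1}^{d} (S_i + S_i^{-1}), where S_i is the permutation matrix shifting the i-th coordinate by +1 modulo n_i. Then for every ε with 0 < ε < 1/2 and every integer t ≥ 2·d·n_1²·⌈ln(d/ε)⌉, and for every starting vertex x, the total variation distance satisfies (1/2)·Σ_y |(P^t)(y,x) − 1/N| ≤ ε. -/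

import Mathlib

/-!
The walk contracts a transport distance, and the contraction is used in its dual form, on Lipschitz
functions. On the cycle `ℤ_m`, a displacement `z ≠ 0` with representative `s` in `(0, m)` costs
`1 + 4 s (m - s) / m²`, and `z = 0` costs nothing; on the lattice the costs of the `d` coordinates
are added. Since `s (m - s)` is the expected time for simple random walk to hit `0`, a step of a
non-zero coordinate lowers its cost by at least `4 / m²` on average, which is at least `2 / m²`
times that cost because no cost exceeds `2`. Let two walkers always pick the same coordinate and
move together if they agree there, one at a time if they differ: when all sides are at most `m`,
the expected cost between them shrinks by the factor `1 - 2 / (d m²)` per step. Distinct points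
are at cost at least `1`, so the cost bounds total variation, and no cost exceeds `2 d`; hence the
total variation distance is at most `2 d exp (-2 t / (d m²))` after `t` steps.
-/

open scoped Matrix

section LipschitzContraction

variable {α : Type*}

/-- Total variation distance between two functions on a finite type, thought of as probability
mass functions. -/
noncomputable def tvDist [Fintype α] (μ ν : α → ℝ) : ℝ :=
  (1 / 2) * ∑ y, |μ y - ν y|

/-- `f` is Lipschitz with constant `M` for the cost `ρ`, which need not be a metric. -/
def LipschitzForCost (ρ : α → α → ℝ) (M : ℝ) (f : α → ℝ) : Prop :=
  ∀ x y, f x - f y ≤ M * ρ x y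

lemma LipschitzForCost.of_abs_le_one {ρ : α → α → ℝ} {f : α → ℝ} (hf : ∀ x, |f x| ≤ 1)
    (hρ : ∀ x, 0 ≤ ρ x x) (hρ_ne : ∀ x y, x ≠ y → 1 ≤ ρ x y) : LipschitzForCost ρ 2 f := by
  intro x y
  rcases eq_or_ne x y with rfl | hxy
  · linarith [hρ x]
  · linarith [(abs_le.mp (hf x)).2, (abs_le.mp (hf y)).1, hρ_ne x y hxy]

variable [Fintype α]

/-- The kernel `P`, with `P y x` the probability of moving from `x` to `y`, contracts Lipschitz
constants for the cost `ρ` by the factor `κ`. For a stochastic `P` and a metric `ρ`, Kantorovich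
duality identifies this with contraction of the transport distance by `κ`, that is, with coarse
Ricci curvature at least `1 - κ`. -/
def ContractsLipschitz (ρ : α → α → ℝ) (κ : ℝ) (P : Matrix α α ℝ) : Prop :=
  ∀ ⦃M : ℝ⦄ ⦃f : α → ℝ⦄, 0 ≤ M → LipschitzForCost ρ M f → LipschitzForCost ρ (M * κ) (f ᵥ* P)

variable {ρ : α → α → ℝ} {κ κ' : ℝ} {P : Matrix α α ℝ}

lemma ContractsLipschitz.mono (hP : ContractsLipschitz ρ κ P) (hρ : ∀ x y, 0 ≤ ρ x y)
    (hκ : κ ≤ κ') : ContractsLipschitz ρ κ' P := fun _ _ hM hf x y =>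
  (hP hM hf x y).trans <|
    mul_le_mul_of_nonneg_right (mul_le_mul_of_nonneg_left hκ hM) (hρ x y)

lemma ContractsLipschitz.pow [DecidableEq α] (hP : ContractsLipschitz ρ κ P) (hκ : 0 ≤ κ)
    (t : ℕ) : ContractsLipschitz ρ (κ ^ t) (P ^ t) := by
  induction t with
  | zero => simp [ContractsLipschitz]
  | succ t ih =>
    intro _ _ hM hf
    rw [pow_succ, pow_succ, ← Matrix.vecMul_vecMul, ← mul_assoc]
    exact hP (by positivity) (ih hM hf)

lemma pow_mulVec_one [DecidableEq α] (hP : P *ᵥ 1 = 1) (t : ℕ) : (P ^ t) *ᵥ 1 = 1 := by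
  induction t with
  | zero => exact Matrix.one_mulVec 1
  | succ t ih => rw [pow_succ, ← Matrix.mulVec_mulVec, hP, ih]

lemma ContractsLipschitz.tvDist_col_le (hP : ContractsLipschitz ρ κ P)
    (hρ : ∀ x, 0 ≤ ρ x x) (hρ_ne : ∀ x y, x ≠ y → 1 ≤ ρ x y) (x z : α) :
    tvDist (fun y => P y x) (fun y => P y z) ≤ κ * ρ x z := by
  -- The sign of the difference is the test function attaining the total variation.
  let s : α → ℝ := fun y => SignType.sign (P y x - P y z)
  have hs : ∀ y, |s y| ≤ 1 := fun y => by
    rcases lt_trichotomy (P y x - P y z) 0 with h | h | h <;> simp [s, h]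
  have hdual : ∑ y, |P y x - P y z| = (s ᵥ* P) x - (s ᵥ* P) z := by
    simp only [Matrix.vecMul, dotProduct, ← Finset.sum_sub_distrib, ← mul_sub, s, sign_mul_self]
  have hcontr := hP zero_le_two (.of_abs_le_one hs hρ hρ_ne) x z
  rw [tvDist, hdual]
  linarith

lemma tvDist_col_uniform_le (hP : P *ᵥ 1 = 1) {x : α} {B : ℝ}
    (hB : ∀ z, tvDist (fun y => P y x) (fun y => P y z) ≤ B) :
    tvDist (fun y => P y x) (fun _ => 1 / (Fintype.card α : ℝ)) ≤ B := by
  have hN : (0 : ℝ) < Fintype.card α := Nat.cast_pos.mpr (Fintype.card_pos_iff.mpr ⟨x⟩)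
  have hrow (y : α) : ∑ z, P y z = 1 := by
    simpa [Matrix.mulVec, dotProduct] using congrFun hP y
  have habs (y : α) :
      Fintype.card α * |P y x - 1 / (Fintype.card α : ℝ)| ≤ ∑ z, |P y x - P y z| := by
    calc Fintype.card α * |P y x - 1 / (Fintype.card α : ℝ)|
        = |∑ z, (P y x - P y z)| := by
          rw [← abs_of_pos hN, ← abs_mul, abs_of_pos hN, Finset.sum_sub_distrib, hrow]
          simp [mul_sub, hN.ne']
      _ ≤ ∑ z, |P y x - P y z| := Finset.abs_sum_le_sum_abs _ _
  refine le_of_mul_le_mul_left ?_ hN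
  calc Fintype.card α * tvDist (fun y => P y x) (fun _ => 1 / (Fintype.card α : ℝ))
      = 1 / 2 * ∑ y, Fintype.card α * |P y x - 1 / (Fintype.card α : ℝ)| := by
        rw [tvDist, ← Finset.mul_sum, mul_left_comm]
    _ ≤ 1 / 2 * ∑ y, ∑ z, |P y x - P y z| := by gcongr with y; exact habs y
    _ = ∑ z, tvDist (fun y => P y x) (fun y => P y z) := by
        rw [Finset.sum_comm, Finset.mul_sum]; rfl
    _ ≤ Fintype.card α * B := by
        simpa using Finset.sum_le_card_nsmul Finset.univ _ B fun z _ => hB z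

end LipschitzContraction

section CycleCost

/-- The parabola `1 + 4 s (m - s) / m²`, an affine function of the expected time `s (m - s)` that
simple random walk started from `s` needs to leave the interval `(0, m)`. -/
noncomputable def exitTimeParabola (m : ℕ) (s : ℝ) : ℝ :=
  1 + 4 * s * (m - s) / (m : ℝ) ^ 2

/-- The cost of a displacement `k` on the cycle of length `m`: zero for `k = 0`, and the value of
the parabola at the representative of `k` in `[0, m)` otherwise. The jump from `0` to at least `1`
makes the cost dominate the discrete metric. -/
noncomputable def cycleCost (m : ℕ) (k : ZMod m) : ℝ :=
  if k = 0 then 0 else exitTimeParabola m k.val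

lemma one_le_exitTimeParabola {m : ℕ} {s : ℝ} (hs₀ : 0 ≤ s) (hs : s ≤ m) :
    1 ≤ exitTimeParabola m s := by
  have : 0 ≤ (m : ℝ) - s := sub_nonneg.mpr hs
  exact le_add_of_nonneg_right (by positivity)

lemma exitTimeParabola_le_two (m : ℕ) (s : ℝ) : exitTimeParabola m s ≤ 2 := by
  have : 4 * s * (m - s) / (m : ℝ) ^ 2 ≤ 1 :=
    div_le_one_of_le₀ (by nlinarith [sq_nonneg ((m : ℝ) - 2 * s)]) (by positivity)
  rw [exitTimeParabola]
  linarith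

lemma exitTimeParabola_average_neighbors (m : ℕ) (s : ℝ) :
    (exitTimeParabola m (s + 1) + exitTimeParabola m (s - 1)) / 2
      = exitTimeParabola m s - 4 / (m : ℝ) ^ 2 := by
  simp only [exitTimeParabola]
  ring

lemma cycleCost_zero (m : ℕ) : cycleCost m 0 = 0 := if_pos rfl

lemma cycleCost_of_ne_zero {m : ℕ} {k : ZMod m} (hk : k ≠ 0) :
    cycleCost m k = exitTimeParabola m k.val := if_neg hk

lemma one_le_cycleCost {m : ℕ} [NeZero m] {k : ZMod m} (hk : k ≠ 0) : 1 ≤ cycleCost m k := by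
  rw [cycleCost_of_ne_zero hk]
  exact one_le_exitTimeParabola k.val.cast_nonneg (mod_cast k.val_le)

lemma cycleCost_nonneg {m : ℕ} [NeZero m] (k : ZMod m) : 0 ≤ cycleCost m k := by
  rcases eq_or_ne k 0 with rfl | hk
  · exact (cycleCost_zero m).ge
  · exact zero_le_one.trans (one_le_cycleCost hk)

lemma cycleCost_le_two {m : ℕ} (k : ZMod m) : cycleCost m k ≤ 2 := by
  rcases eq_or_ne k 0 with rfl | hk
  · exact (cycleCost_zero m).trans_le zero_le_two
  · exact (cycleCost_of_ne_zero hk).trans_le (exitTimeParabola_le_two _ _)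

lemma cycleCost_natCast_le {m v : ℕ} (hv : v ≤ m) :
    cycleCost m (v : ZMod m) ≤ exitTimeParabola m v := by
  rcases eq_or_ne (v : ZMod m) 0 with h | h
  · rw [h, cycleCost_zero]
    exact zero_le_one.trans (one_le_exitTimeParabola v.cast_nonneg (mod_cast hv))
  · have hvm : v < m := hv.lt_of_ne fun hvm => h (by simp [hvm])
    rw [cycleCost_of_ne_zero h, ZMod.val_natCast_of_lt hvm]

lemma cycleCost_average_neighbors_le {m : ℕ} [NeZero m] {k : ZMod m} (hk : k ≠ 0) :
    (cycleCost m (k + 1) + cycleCost m (k - 1)) / 2 ≤ (1 - 2 / (m : ℝ) ^ 2) * cycleCost m k := by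
  have hval : 1 ≤ k.val := Nat.one_le_iff_ne_zero.mpr ((ZMod.val_ne_zero k).mpr hk)
  have hsucc : cycleCost m (k + 1) ≤ exitTimeParabola m (k.val + 1) := by
    simpa using cycleCost_natCast_le (Nat.succ_le_of_lt k.val_lt)
  have hpred : cycleCost m (k - 1) ≤ exitTimeParabola m (k.val - 1) := by
    simpa [Nat.cast_sub hval] using cycleCost_natCast_le ((Nat.sub_le _ 1).trans k.val_le)
  have hdrift : 2 / (m : ℝ) ^ 2 * cycleCost m k ≤ 2 / (m : ℝ) ^ 2 * 2 := by
    gcongr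
    exact cycleCost_le_two k
  have hdouble : 2 / (m : ℝ) ^ 2 * 2 = 4 / (m : ℝ) ^ 2 := by ring
  have hparabola := exitTimeParabola_average_neighbors m k.val
  rw [← cycleCost_of_ne_zero hk] at hparabola
  linarith

end CycleCost

section LatticeCost

variable {ι : Type*} [Fintype ι] {n : ι → ℕ}

/-- The cost of a displacement on the periodic lattice: the sum of the costs of its coordinates. -/
noncomputable def latticeCost (z : ∀ i, ZMod (n i)) : ℝ :=
  ∑ i, cycleCost (n i) (z i)

lemma latticeCost_le (z : ∀ i, ZMod (n i)) : latticeCost z ≤ 2 * Fintype.card ι := by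
  simpa [latticeCost, mul_comm] using
    Finset.sum_le_card_nsmul Finset.univ _ 2 fun i _ => cycleCost_le_two (z i)

lemma latticeCost_add_single [DecidableEq ι] (z : ∀ i, ZMod (n i)) (i : ι) (a : ZMod (n i)) :
    latticeCost (z + Pi.single i a)
      = latticeCost z - cycleCost (n i) (z i) + cycleCost (n i) (z i + a) := by
  have hdiff : latticeCost (z + Pi.single i a) - latticeCost z
      = cycleCost (n i) (z i + a) - cycleCost (n i) (z i) := by
    rw [latticeCost, latticeCost, ← Finset.sum_sub_distrib,
      Fintype.sum_eq_single i fun j hj => by simp [hj]]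
    simp
  linarith

variable [∀ i, NeZero (n i)]

lemma latticeCost_nonneg (z : ∀ i, ZMod (n i)) : 0 ≤ latticeCost z :=
  Finset.sum_nonneg fun i _ => cycleCost_nonneg (z i)

lemma one_le_latticeCost {z : ∀ i, ZMod (n i)} (hz : z ≠ 0) : 1 ≤ latticeCost z := by
  obtain ⟨i, hi⟩ := Function.ne_iff.mp hz
  exact (one_le_cycleCost hi).trans <|
    Finset.single_le_sum (f := fun j => cycleCost (n j) (z j))
      (fun j _ => cycleCost_nonneg (z j)) (Finset.mem_univ i)

lemma latticeCost_average_neighbors_le [DecidableEq ι] {z : ∀ i, ZMod (n i)} {i : ι}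
    (hz : z i ≠ 0) :
    (latticeCost (z + Pi.single i 1) + latticeCost (z - Pi.single i 1)) / 2
      ≤ latticeCost z - 2 / (n i : ℝ) ^ 2 * cycleCost (n i) (z i) := by
  rw [sub_eq_add_neg z, ← Pi.single_neg, latticeCost_add_single, latticeCost_add_single,
    ← sub_eq_add_neg]
  linarith [cycleCost_average_neighbors_le hz]

end LatticeCost

section ShiftMatrix

variable {G : Type*} [AddCommGroup G] [DecidableEq G]

/-- The kernel of the deterministic move `x ↦ x + a`: as columns index starting points, its entry
at `(y, x)` is `1` exactly when `y = x + a`. -/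
def shiftMatrix (a : G) : Matrix G G ℝ :=
  Equiv.Perm.permMatrix ℝ (Equiv.subRight a)

lemma shiftMatrix_apply (a y x : G) : shiftMatrix a y x = if y = x + a then 1 else 0 := by
  simp [shiftMatrix, Equiv.Perm.permMatrix, PEquiv.toMatrix_apply, eq_sub_iff_add_eq, eq_comm]

lemma shiftMatrix_mulVec_one [Fintype G] (a : G) : shiftMatrix a *ᵥ 1 = 1 := by
  rw [shiftMatrix, Matrix.permMatrix_mulVec]
  rfl

lemma vecMul_shiftMatrix [Fintype G] (a : G) (f : G → ℝ) (x : G) :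
    (f ᵥ* shiftMatrix a) x = f (x + a) := by
  rw [shiftMatrix, Matrix.vecMul_permMatrix]
  rfl

end ShiftMatrix

section LazyWalk

lemma update_add_eq_add_single {ι : Type*} [DecidableEq ι] {β : ι → Type*}
    [∀ i, AddZeroClass (β i)] (x : ∀ i, β i) (i : ι) (a : β i) :
    Function.update x i (x i + a) = x + Pi.single i a := by
  ext j
  rcases eq_or_ne j i with rfl | hj <;> simp [*]

variable {ι : Type*} [Fintype ι] [DecidableEq ι] (n : ι → ℕ)

/-- The lazy simple random walk on the `i`-th coordinate cycle, all other coordinates being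
frozen. -/
noncomputable def coordinateWalk (i : ι) : Matrix (∀ i, ZMod (n i)) (∀ i, ZMod (n i)) ℝ :=
  (1 / 2 : ℝ) • 1 + (1 / 4 : ℝ) • (shiftMatrix (Pi.single i 1) + shiftMatrix (-Pi.single i 1))

/-- The lazy random walk on the periodic lattice, as the walk that makes a lazy step in a
uniformly random coordinate. -/
noncomputable def lazyLatticeWalk : Matrix (∀ i, ZMod (n i)) (∀ i, ZMod (n i)) ℝ :=
  (1 / Fintype.card ι : ℝ) • ∑ i, coordinateWalk n i

variable {n}

lemma lazyLatticeWalk_apply [Nonempty ι] (y x : ∀ i, ZMod (n i)) :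
    lazyLatticeWalk n y x = (if y = x then (1 / 2 : ℝ) else 0)
      + (1 / (4 * (Fintype.card ι : ℝ))) * ∑ i,
          ((if y = Function.update x i (x i + 1) then (1 : ℝ) else 0)
            + (if y = Function.update x i (x i - 1) then (1 : ℝ) else 0)) := by
  have : (Fintype.card ι : ℝ) ≠ 0 := Nat.cast_ne_zero.mpr Fintype.card_ne_zero
  simp only [sub_eq_add_neg (x _), update_add_eq_add_single, Pi.single_neg, lazyLatticeWalk,
    coordinateWalk, Matrix.smul_apply, Matrix.sum_apply, Matrix.add_apply, Matrix.one_apply,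
    shiftMatrix_apply, smul_eq_mul, Finset.sum_add_distrib, ← Finset.mul_sum, Finset.sum_const,
    Finset.card_univ, nsmul_eq_mul]
  split_ifs
  · field_simp
  · field_simp
    ring

variable [∀ i, NeZero (n i)]

lemma coordinateWalk_mulVec_one (i : ι) : coordinateWalk n i *ᵥ 1 = 1 := by
  simp only [coordinateWalk, Matrix.add_mulVec, Matrix.smul_mulVec, Matrix.one_mulVec,
    shiftMatrix_mulVec_one]
  module

lemma lazyLatticeWalk_mulVec_one [Nonempty ι] : lazyLatticeWalk n *ᵥ 1 = 1 := by
  simp [lazyLatticeWalk, Matrix.smul_mulVec, Matrix.sum_mulVec, coordinateWalk_mulVec_one,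
    ← Nat.cast_smul_eq_nsmul ℝ, smul_smul]

lemma vecMul_coordinateWalk (f : (∀ i, ZMod (n i)) → ℝ) (i : ι) (x : ∀ i, ZMod (n i)) :
    (f ᵥ* coordinateWalk n i) x
      = f x / 2 + (f (x + Pi.single i 1) + f (x - Pi.single i 1)) / 4 := by
  simp only [coordinateWalk, Matrix.vecMul_add, Matrix.vecMul_smul, Matrix.vecMul_one,
    Pi.add_apply, Pi.smul_apply, vecMul_shiftMatrix, smul_eq_mul, ← sub_eq_add_neg]
  ring

lemma vecMul_lazyLatticeWalk (f : (∀ i, ZMod (n i)) → ℝ) (x : ∀ i, ZMod (n i)) :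
    (f ᵥ* lazyLatticeWalk n) x = (∑ i, (f ᵥ* coordinateWalk n i) x) / Fintype.card ι := by
  simp only [lazyLatticeWalk, Matrix.vecMul_smul, Matrix.vecMul_sum, Pi.smul_apply,
    Finset.sum_apply, smul_eq_mul, one_div_mul_eq_div]

lemma vecMul_coordinateWalk_sub_le {M : ℝ} {f : (∀ i, ZMod (n i)) → ℝ} (hM : 0 ≤ M)
    (hf : ∀ x y, f x - f y ≤ M * latticeCost (x - y)) (i : ι)
    (x y : ∀ i, ZMod (n i)) :
    (f ᵥ* coordinateWalk n i) x - (f ᵥ* coordinateWalk n i) y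
      ≤ M * (latticeCost (x - y) - 2 / (n i : ℝ) ^ 2 * cycleCost (n i) ((x - y) i)) := by
  simp only [vecMul_coordinateWalk]
  rcases eq_or_ne ((x - y) i) 0 with hxy | hxy
  · rw [hxy, cycleCost_zero]
    have hstay := hf x y
    have hup := hf (x + Pi.single i 1) (y + Pi.single i 1)
    have hdown := hf (x - Pi.single i 1) (y - Pi.single i 1)
    rw [add_sub_add_right_eq_sub] at hup
    rw [sub_sub_sub_cancel_right] at hdown
    linarith
  · have hx_up := hf (x + Pi.single i 1) y
    have hx_down := hf (x - Pi.single i 1) y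
    have hy_up := hf x (y + Pi.single i 1)
    have hy_down := hf x (y - Pi.single i 1)
    rw [add_sub_right_comm] at hx_up
    rw [sub_right_comm] at hx_down
    rw [← sub_sub] at hy_up
    rw [← sub_add] at hy_down
    have hdrift := mul_le_mul_of_nonneg_left (latticeCost_average_neighbors_le hxy) hM
    linarith

lemma contractsLipschitz_lazyLatticeWalk [Nonempty ι] {m : ℕ} (hm : ∀ i, n i ≤ m) :
    ContractsLipschitz (fun x y => latticeCost (x - y))
      (1 - 2 / (Fintype.card ι * (m : ℝ) ^ 2)) (lazyLatticeWalk n) := by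
  intro M f hM hf x y
  have : (0 : ℝ) < Fintype.card ι := Nat.cast_pos.mpr Fintype.card_pos
  have hcoord (i : ι) : (f ᵥ* coordinateWalk n i) x - (f ᵥ* coordinateWalk n i) y
      ≤ M * (latticeCost (x - y) - 2 / (m : ℝ) ^ 2 * cycleCost (n i) ((x - y) i)) := by
    have : (0 : ℝ) < n i := Nat.cast_pos.mpr (NeZero.pos (n i))
    refine (vecMul_coordinateWalk_sub_le hM hf i x y).trans ?_
    gcongr
    · exact cycleCost_nonneg _
    · exact hm i
  calc (f ᵥ* lazyLatticeWalk n) x - (f ᵥ* lazyLatticeWalk n) y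
      = (∑ i, ((f ᵥ* coordinateWalk n i) x - (f ᵥ* coordinateWalk n i) y)) / Fintype.card ι := by
        rw [vecMul_lazyLatticeWalk, vecMul_lazyLatticeWalk, ← sub_div, Finset.sum_sub_distrib]
    _ ≤ (∑ i, M * (latticeCost (x - y) - 2 / (m : ℝ) ^ 2 * cycleCost (n i) ((x - y) i)))
          / Fintype.card ι := by
        gcongr with i
        exact hcoord i
    _ = M * (Fintype.card ι * latticeCost (x - y) - 2 / (m : ℝ) ^ 2 * latticeCost (x - y))
          / Fintype.card ι := by
        rw [← Finset.mul_sum, Finset.sum_sub_distrib, ← Finset.mul_sum, Finset.sum_const,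
          Finset.card_univ, nsmul_eq_mul, ← latticeCost]
    _ = M * (1 - 2 / (Fintype.card ι * (m : ℝ) ^ 2)) * latticeCost (x - y) := by
        field_simp

lemma tvDist_lazyLatticeWalk_pow_le [Nonempty ι] {m : ℕ} (hm : ∀ i, n i ≤ m) (t : ℕ)
    (x : ∀ i, ZMod (n i)) :
    tvDist (fun y => (lazyLatticeWalk n ^ t) y x) (fun _ => 1 / ((∏ i, n i : ℕ) : ℝ))
      ≤ 2 * Fintype.card ι * Real.exp (-(2 * t / (Fintype.card ι * (m : ℝ) ^ 2))) := by
  set r : ℝ := 2 / (Fintype.card ι * (m : ℝ) ^ 2)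
  have hcontr : ContractsLipschitz (fun x y => latticeCost (x - y)) (Real.exp (-r) ^ t)
      (lazyLatticeWalk n ^ t) :=
    ((contractsLipschitz_lazyLatticeWalk hm).mono (fun _ _ => latticeCost_nonneg _)
      (Real.one_sub_le_exp_neg r)).pow (Real.exp_nonneg _) t
  have hcol (z : ∀ i, ZMod (n i)) :
      tvDist (fun y => (lazyLatticeWalk n ^ t) y x) (fun y => (lazyLatticeWalk n ^ t) y z)
        ≤ Real.exp (-r) ^ t * (2 * Fintype.card ι) :=
    (hcontr.tvDist_col_le (fun _ => latticeCost_nonneg _)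
      (fun _ _ h => one_le_latticeCost (sub_ne_zero.mpr h)) x z).trans <|
        mul_le_mul_of_nonneg_left (latticeCost_le _) (by positivity)
  have hcard : Fintype.card (∀ i, ZMod (n i)) = ∏ i, n i := by
    simp only [Fintype.card_pi, ZMod.card]
  have hexp : Real.exp (-r) ^ t
      = Real.exp (-(2 * t / (Fintype.card ι * (m : ℝ) ^ 2))) := by
    rw [← Real.exp_nat_mul, mul_neg, ← mul_div_assoc, mul_comm (t : ℝ)]
  rw [← hcard, ← hexp, mul_comm]
  exact tvDist_col_uniform_le (pow_mulVec_one lazyLatticeWalk_mulVec_one t) hcol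

theorem lazy_random_walk_mixing_on_periodic_lattice_general [Nonempty ι] {m : ℕ}
    (hm : ∀ i, n i ≤ m) {ε : ℝ} (hε : 0 < ε) {t : ℕ}
    (ht : Fintype.card ι * (m : ℝ) ^ 2 / 2 * Real.log (2 * (Fintype.card ι / ε)) ≤ t)
    (x : ∀ i, ZMod (n i)) :
    tvDist (fun y => (lazyLatticeWalk n ^ t) y x) (fun _ => 1 / ((∏ i, n i : ℕ) : ℝ)) ≤ ε := by
  have : (0 : ℝ) < Fintype.card ι := Nat.cast_pos.mpr Fintype.card_pos
  have : (0 : ℝ) < m :=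
    Nat.cast_pos.mpr ((NeZero.pos (n (Classical.arbitrary ι))).trans_le (hm _))
  have hlog : Real.log (2 * (Fintype.card ι / ε)) ≤ 2 * t / (Fintype.card ι * (m : ℝ) ^ 2) := by
    rw [le_div_iff₀ (by positivity)]
    linarith
  calc tvDist (fun y => (lazyLatticeWalk n ^ t) y x) (fun _ => 1 / ((∏ i, n i : ℕ) : ℝ))
      ≤ 2 * Fintype.card ι * Real.exp (-(2 * t / (Fintype.card ι * (m : ℝ) ^ 2))) :=
        tvDist_lazyLatticeWalk_pow_le hm t x
    _ ≤ 2 * Fintype.card ι * Real.exp (-Real.log (2 * (Fintype.card ι / ε))) := by gcongr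
    _ = ε := by
        rw [Real.exp_neg, Real.exp_log (by positivity)]
        field_simp

end LazyWalk

lemma log_two_mul_le_four_mul_ceil_log {a : ℝ} (ha : 1 < a) :
    Real.log (2 * a) ≤ 4 * ⌈Real.log a⌉ := by
  have hone : (1 : ℝ) ≤ ⌈Real.log a⌉ := by
    exact_mod_cast Int.one_le_ceil_iff.mpr (Real.log_pos ha)
  rw [Real.log_mul two_ne_zero (by positivity)]
  linarith [Real.log_two_lt_d9, Int.le_ceil (Real.log a)]

/-- The lazy random walk on the periodic lattice
`ℤ_{n 0} × ⋯ × ℤ_{n (d-1)}` (laziness 1/2, otherwise a uniformly random coordinate is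
shifted by ±1) mixes to within total variation `ε` of uniform after
`2 d n₁² ⌈ln(d/ε)⌉` steps, where `n₁ = n ⟨0,hd⟩` is the largest side length. -/
theorem lazy_random_walk_mixing_on_periodic_lattice
    (d : ℕ) (hd : 0 < d) (n : Fin d → ℕ) [∀ i, NeZero (n i)]
    (hn2 : ∀ i, 2 ≤ n i) (hmax : ∀ i, n i ≤ n ⟨0, hd⟩)
    (P : Matrix (∀ i, ZMod (n i)) (∀ i, ZMod (n i)) ℝ)
    (hP : ∀ x y : ∀ i, ZMod (n i),
      P y x = (if y = x then (1 / 2 : ℝ) else 0)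
        + (1 / (4 * (d : ℝ))) * ∑ i : Fin d,
            ((if y = Function.update x i (x i + 1) then (1 : ℝ) else 0)
              + (if y = Function.update x i (x i - 1) then (1 : ℝ) else 0)))
    (ε : ℝ) (hε0 : 0 < ε) (hε : ε < 1 / 2)
    (t : ℕ)
    (ht : (2 * (d : ℝ) * (n ⟨0, hd⟩ : ℝ) ^ 2) * (⌈Real.log ((d : ℝ) / ε)⌉ : ℝ) ≤ (t : ℝ))
    (x : ∀ i, ZMod (n i)) :
    (1 / 2) * ∑ y : ∀ i, ZMod (n i),
        |(P ^ t) y x - 1 / ((∏ i, n i : ℕ) : ℝ)| ≤ ε := by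
  have : Nonempty (Fin d) := ⟨⟨0, hd⟩⟩
  have hP_eq : P = lazyLatticeWalk n := by
    ext y x
    rw [hP, lazyLatticeWalk_apply, Fintype.card_fin]
  have hd_one : (1 : ℝ) ≤ d := Nat.one_le_cast.mpr hd
  have hlog := log_two_mul_le_four_mul_ceil_log ((one_lt_div hε0).mpr (by linarith : ε < d))
  have htime : (Fintype.card (Fin d) : ℝ) * (n ⟨0, hd⟩ : ℝ) ^ 2 / 2
      * Real.log (2 * (Fintype.card (Fin d) / ε)) ≤ t := by
    rw [Fintype.card_fin]
    calc (d : ℝ) * (n ⟨0, hd⟩ : ℝ) ^ 2 / 2 * Real.log (2 * (d / ε))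
        ≤ d * (n ⟨0, hd⟩ : ℝ) ^ 2 / 2 * (4 * ⌈Real.log (d / ε)⌉) := by gcongr
      _ = 2 * d * (n ⟨0, hd⟩ : ℝ) ^ 2 * ⌈Real.log (d / ε)⌉ := by ring
      _ ≤ t := ht
  rw [hP_eq]
  exact lazy_random_walk_mixing_on_periodic_lattice_general hmax hε0 htime x
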